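/- arXiv:1607.00923 — 2 statements merged into one kernel-verified Lean document; each statement's English description precedes it below -/
import Mathlib

section
/- Let u, v, p : ℝ³ → ℝ be as above (u C², v, p C¹, p C², with ∂_x u + ∂_y v = 0, ∂_t u + u ∂_x u + v ∂_y u = −∂_x p and ∂_y(∂_x p) = 0 everywhere). Let x, y : ℝ → ℝ be C¹ functions satisfying the characteristic ODEs x′(t) = u(t, x(t), y(t)) and y′(t) = v(t, x(t), y(t)) for all t. Then the function t ↦ ∂_y u(t, x(t), y(t)) is constant. In particular, if the vertical shear ∂_y u vanishes at one point of such a characteristic curve, it vanishes along the whole curve. -/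
/-- Partial derivative in the first coordinate (time) of a function on ℝ³. -/
noncomputable def pt3 (f : ℝ × ℝ × ℝ → ℝ) (q : ℝ × ℝ × ℝ) : ℝ :=
  deriv (fun s => f (s, q.2.1, q.2.2)) q.1

/-- Partial derivative in the second coordinate (horizontal) of a function on ℝ³. -/
noncomputable def px3 (f : ℝ × ℝ × ℝ → ℝ) (q : ℝ × ℝ × ℝ) : ℝ :=
  deriv (fun s => f (q.1, s, q.2.2)) q.2.1

/-- Partial derivative in the third coordinate (vertical) of a function on ℝ³. -/
noncomputable def py3 (f : ℝ × ℝ × ℝ → ℝ) (q : ℝ × ℝ × ℝ) : ℝ :=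
  deriv (fun s => f (q.1, q.2.1, s)) q.2.2

/-!
Write `D = ∂_t + u ∂_x + v ∂_y`. The commutator `[∂_y, D]` is `∂_y u ∂_x + ∂_y v ∂_y`; applied to
`u` it gives `∂_y u (∂_x u + ∂_y v)`, which vanishes by incompressibility. Hence
`D (∂_y u) = ∂_y (D u) = -∂_y (∂_x p) = 0`, and `D` is differentiation along characteristics.
-/

open VectorField
open scoped Topology

section ContDiffAtTwo

variable {𝕜 E F : Type*} [NontriviallyNormedField 𝕜] [NormedAddCommGroup E] [NormedSpace 𝕜 E]
  [NormedAddCommGroup F] [NormedSpace 𝕜 F] {f : E → F} {q : E}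

lemma eventually_differentiableAt_of_contDiffAt_two (hf : ContDiffAt 𝕜 2 f q) :
    ∀ᶠ r in 𝓝 q, DifferentiableAt 𝕜 f r :=
  (hf.eventually (by simp)).mono fun _ h => h.differentiableAt two_ne_zero

lemma differentiableAt_fderiv_of_contDiffAt_two (hf : ContDiffAt 𝕜 2 f q) :
    DifferentiableAt 𝕜 (fderiv 𝕜 f) q :=
  (hf.fderiv_right (m := 1) (by norm_num)).differentiableAt one_ne_zero

end ContDiffAtTwo

section PartialDerivatives

variable {f g : ℝ × ℝ × ℝ → ℝ} {q : ℝ × ℝ × ℝ}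

lemma pt3_eq_fderiv (hf : DifferentiableAt ℝ f q) : pt3 f q = fderiv ℝ f q (1, 0, 0) := by
  have hline : HasDerivAt (fun s : ℝ => (s, q.2.1, q.2.2)) (1, 0, 0) q.1 :=
    (hasDerivAt_id _).prodMk ((hasDerivAt_const _ _).prodMk (hasDerivAt_const _ _))
  exact (hf.hasFDerivAt.comp_hasDerivAt q.1 hline).deriv

lemma px3_eq_fderiv (hf : DifferentiableAt ℝ f q) : px3 f q = fderiv ℝ f q (0, 1, 0) := by
  have hline : HasDerivAt (fun s : ℝ => (q.1, s, q.2.2)) (0, 1, 0) q.2.1 :=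
    (hasDerivAt_const _ _).prodMk ((hasDerivAt_id _).prodMk (hasDerivAt_const _ _))
  exact (hf.hasFDerivAt.comp_hasDerivAt q.2.1 hline).deriv

lemma py3_eq_fderiv (hf : DifferentiableAt ℝ f q) : py3 f q = fderiv ℝ f q (0, 0, 1) := by
  have hline : HasDerivAt (fun s : ℝ => (q.1, q.2.1, s)) (0, 0, 1) q.2.2 :=
    (hasDerivAt_const _ _).prodMk ((hasDerivAt_const _ _).prodMk (hasDerivAt_id _))
  exact (hf.hasFDerivAt.comp_hasDerivAt q.2.2 hline).deriv

lemma py3_neg : py3 (fun r => -f r) q = -py3 f q :=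
  deriv.fun_neg

lemma py3_congr_of_eventuallyEq (h : f =ᶠ[𝓝 q] g) : py3 f q = py3 g q := by
  have hline : ContinuousAt (fun s : ℝ => (q.1, q.2.1, s)) q.2.2 := by fun_prop
  exact (h.comp_tendsto hline).deriv_eq

lemma py3_eventuallyEq_fderiv (hf : ContDiffAt ℝ 2 f q) :
    py3 f =ᶠ[𝓝 q] fun r => fderiv ℝ f r (0, 0, 1) :=
  (eventually_differentiableAt_of_contDiffAt_two hf).mono fun _ => py3_eq_fderiv

lemma differentiableAt_py3 (hf : ContDiffAt ℝ 2 f q) : DifferentiableAt ℝ (py3 f) q :=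
  ((differentiableAt_fderiv_of_contDiffAt_two hf).clm_apply
    (differentiableAt_const _)).congr_of_eventuallyEq (py3_eventuallyEq_fderiv hf)

end PartialDerivatives

/-- The velocity field `(1, u, v)` on space-time. Adjoining time as a coordinate makes it
autonomous: characteristic curves are its integral curves of the form `t ↦ (t, x t, y t)`. -/
def spacetimeVelocity (u v : ℝ × ℝ × ℝ → ℝ) (q : ℝ × ℝ × ℝ) : ℝ × ℝ × ℝ :=
  (1, u q, v q)

/-- The material derivative `∂_t f + u ∂_x f + v ∂_y f`: the rate of change of `f` along the flow
with velocity `(u, v)`. -/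
noncomputable def materialDeriv (u v f : ℝ × ℝ × ℝ → ℝ) (q : ℝ × ℝ × ℝ) : ℝ :=
  pt3 f q + u q * px3 f q + v q * py3 f q

section MaterialDerivative

variable {u v f : ℝ × ℝ × ℝ → ℝ} {q : ℝ × ℝ × ℝ}

lemma fderiv_apply_eq_materialDeriv (hf : DifferentiableAt ℝ f q) :
    fderiv ℝ f q (spacetimeVelocity u v q) = materialDeriv u v f q := by
  have hdecomp : spacetimeVelocity u v q = (1, 0, 0) + u q • (0, 1, 0) + v q • (0, 0, 1) := by
    simp [spacetimeVelocity]
  rw [hdecomp, map_add, map_add, map_smul, map_smul, smul_eq_mul, smul_eq_mul, materialDeriv,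
    pt3_eq_fderiv hf, px3_eq_fderiv hf, py3_eq_fderiv hf]

lemma differentiableAt_spacetimeVelocity (hu : DifferentiableAt ℝ u q)
    (hv : DifferentiableAt ℝ v q) : DifferentiableAt ℝ (spacetimeVelocity u v) q :=
  (differentiableAt_const _).prodMk (hu.prodMk hv)

lemma lieBracket_vertical_spacetimeVelocity (hu : DifferentiableAt ℝ u q)
    (hv : DifferentiableAt ℝ v q) :
    lieBracket ℝ (fun _ => (0, 0, 1)) (spacetimeVelocity u v) q = (0, py3 u q, py3 v q) := by
  have hfderiv : HasFDerivAt (spacetimeVelocity u v)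
      ((0 : ℝ × ℝ × ℝ →L[ℝ] ℝ).prod ((fderiv ℝ u q).prod (fderiv ℝ v q))) q :=
    (hasFDerivAt_const _ _).prodMk (hu.hasFDerivAt.prodMk hv.hasFDerivAt)
  simp [lieBracket, hfderiv.fderiv, py3_eq_fderiv hu, py3_eq_fderiv hv]

lemma py3_materialDeriv (hu : DifferentiableAt ℝ u q) (hv : DifferentiableAt ℝ v q)
    (hf : ContDiffAt ℝ 2 f q) :
    py3 (materialDeriv u v f) q =
      materialDeriv u v (py3 f) q + py3 u q * px3 f q + py3 v q * py3 f q := by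
  have hfd : DifferentiableAt ℝ f q := hf.differentiableAt two_ne_zero
  have hW := differentiableAt_spacetimeVelocity hu hv
  have hpy3_materialDeriv : py3 (materialDeriv u v f) q =
      fderiv ℝ (fun r => fderiv ℝ f r (spacetimeVelocity u v r)) q (0, 0, 1) := by
    rw [← py3_eq_fderiv ((differentiableAt_fderiv_of_contDiffAt_two hf).clm_apply hW)]
    exact py3_congr_of_eventuallyEq
      ((eventually_differentiableAt_of_contDiffAt_two hf).mono fun _ h =>
        (fderiv_apply_eq_materialDeriv h).symm)
  have hmaterialDeriv_py3 : materialDeriv u v (py3 f) q =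
      fderiv ℝ (fun r => fderiv ℝ f r (0, 0, 1)) q (spacetimeVelocity u v q) := by
    rw [← fderiv_apply_eq_materialDeriv (differentiableAt_py3 hf),
      (py3_eventuallyEq_fderiv hf).fderiv_eq]
  have hbracket : fderiv ℝ f q (0, py3 u q, py3 v q) =
      py3 u q * px3 f q + py3 v q * py3 f q := by
    have hdecomp : ((0, py3 u q, py3 v q) : ℝ × ℝ × ℝ) =
        py3 u q • (0, 1, 0) + py3 v q • (0, 0, 1) := by simp
    rw [hdecomp, map_add, map_smul, map_smul, smul_eq_mul, smul_eq_mul, px3_eq_fderiv hfd,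
      py3_eq_fderiv hfd]
  have hcomm := fderiv_apply_lieBracket hf (by simp) hW (differentiableAt_const (0, 0, 1))
  rw [lieBracket_vertical_spacetimeVelocity hu hv, hbracket, ← hpy3_materialDeriv,
    ← hmaterialDeriv_py3] at hcomm
  linear_combination -hcomm

lemma materialDeriv_py3_self (hu : ContDiffAt ℝ 2 u q) (hv : DifferentiableAt ℝ v q) :
    materialDeriv u v (py3 u) q =
      py3 (materialDeriv u v u) q - (px3 u q + py3 v q) * py3 u q := by
  linear_combination -py3_materialDeriv (hu.differentiableAt two_ne_zero) hv hu

lemma isIntegralCurve_spacetimeVelocity {x y : ℝ → ℝ}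
    (hx : Differentiable ℝ x) (hy : Differentiable ℝ y)
    (hxode : ∀ t, deriv x t = u (t, x t, y t)) (hyode : ∀ t, deriv y t = v (t, x t, y t)) :
    IsIntegralCurve (fun t => (t, x t, y t)) (fun _ => spacetimeVelocity u v) := fun t =>
  (hasDerivAt_id t).prodMk
    ((hxode t ▸ (hx t).hasDerivAt).prodMk (hyode t ▸ (hy t).hasDerivAt))

end MaterialDerivative

lemma eq_of_isIntegralCurveOn_of_fderiv_eq_zero {E F : Type*} [NormedAddCommGroup E]
    [NormedSpace ℝ E] [NormedAddCommGroup F] [NormedSpace ℝ F] {γ : ℝ → E} {V : ℝ → E → E}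
    {I : Set ℝ} {f : E → F} (hI : Convex ℝ I) (hγ : IsIntegralCurveOn γ V I)
    (hf : ∀ t ∈ I, DifferentiableAt ℝ f (γ t)) (hV : ∀ t ∈ I, fderiv ℝ f (γ t) (V t (γ t)) = 0)
    {s t : ℝ} (hs : s ∈ I) (ht : t ∈ I) : f (γ s) = f (γ t) := by
  have hderiv : ∀ r ∈ I, HasDerivWithinAt (f ∘ γ) 0 I r := fun r hr =>
    hV r hr ▸ (hf r hr).hasFDerivAt.comp_hasDerivWithinAt r (hγ r hr)
  have hle := hI.norm_image_sub_le_of_norm_hasDerivWithin_le hderiv (fun _ _ => norm_zero.le) ht hs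
  rwa [zero_mul, norm_le_zero_iff, sub_eq_zero] at hle

theorem shear_constant_along_characteristics_general {u v : ℝ × ℝ × ℝ → ℝ} {γ : ℝ → ℝ × ℝ × ℝ}
    {I : Set ℝ} (hI : Convex ℝ I) (hγ : IsIntegralCurveOn γ (fun _ => spacetimeVelocity u v) I)
    (hu : ∀ t ∈ I, ContDiffAt ℝ 2 u (γ t)) (hv : ∀ t ∈ I, DifferentiableAt ℝ v (γ t))
    (hincomp : ∀ t ∈ I, px3 u (γ t) + py3 v (γ t) = 0)
    (haccel : ∀ t ∈ I, py3 (materialDeriv u v u) (γ t) = 0)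
    {s t : ℝ} (hs : s ∈ I) (ht : t ∈ I) : py3 u (γ s) = py3 u (γ t) := by
  refine eq_of_isIntegralCurveOn_of_fderiv_eq_zero hI hγ
    (fun r hr => differentiableAt_py3 (hu r hr)) (fun r hr => ?_) hs ht
  rw [fderiv_apply_eq_materialDeriv (differentiableAt_py3 (hu r hr)),
    materialDeriv_py3_self (hu r hr) (hv r hr), haccel r hr, hincomp r hr, zero_mul, sub_zero]

/-- For the hydrostatic Euler (long-wave) equations, the vertical shear
`∂_y u` is constant along characteristic curves `x' = u, y' = v`; in
particular if it vanishes at one point of the curve it vanishes on the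
whole curve. -/
theorem shear_constant_along_characteristics
    (u v p : ℝ × ℝ × ℝ → ℝ)
    (hu : ContDiff ℝ 2 u) (hv : ContDiff ℝ 1 v) (hp : ContDiff ℝ 2 p)
    (hincomp : ∀ q : ℝ × ℝ × ℝ, px3 u q + py3 v q = 0)
    (hmom : ∀ q : ℝ × ℝ × ℝ,
      pt3 u q + u q * px3 u q + v q * py3 u q = - px3 p q)
    (hpress : ∀ q : ℝ × ℝ × ℝ, py3 (px3 p) q = 0)
    (x y : ℝ → ℝ) (hx : ContDiff ℝ 1 x) (hy : ContDiff ℝ 1 y)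
    (hxode : ∀ t : ℝ, deriv x t = u (t, x t, y t))
    (hyode : ∀ t : ℝ, deriv y t = v (t, x t, y t)) :
    (∀ s t : ℝ, py3 u (s, x s, y s) = py3 u (t, x t, y t)) ∧
    (∀ t₀ : ℝ, py3 u (t₀, x t₀, y t₀) = 0 → ∀ t : ℝ, py3 u (t, x t, y t) = 0) := by
  have hγ : IsIntegralCurve (fun t => (t, x t, y t)) (fun _ => spacetimeVelocity u v) :=
    isIntegralCurve_spacetimeVelocity (hx.differentiable one_ne_zero)
      (hy.differentiable one_ne_zero) hxode hyode
  have haccel : ∀ q, py3 (materialDeriv u v u) q = 0 := fun q => by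
    rw [show materialDeriv u v u = fun r => -px3 p r from funext hmom, py3_neg, hpress, neg_zero]
  have hconst : ∀ s t, py3 u (s, x s, y s) = py3 u (t, x t, y t) := fun s t =>
    shear_constant_along_characteristics_general convex_univ (hγ.isIntegralCurveOn Set.univ)
      (fun _ _ => hu.contDiffAt) (fun _ _ => hv.differentiable one_ne_zero _)
      (fun _ _ => hincomp _) (fun _ _ => haccel _) (Set.mem_univ s) (Set.mem_univ t)
  exact ⟨hconst, fun t₀ h₀ t => (hconst t t₀).trans h₀⟩
end

section
/- Let δ̄ ≠ 0 and let h, U, u_e, p, δ₁, δ₂, τ̄_b : ℝ² → ℝ (functions of (t,x)) be differentiable. Assume at every point: (i) ideal fluid momentum ∂_t u_e + u_e ∂_x u_e = −∂_x p; (ii) mass conservation ∂_t h + ∂_x(hU) = 0; (iii) momentum conservation with closed flux ∂_t(hU) + ∂_x((h − δ̄(δ₁ + δ₂)) u_e²) = −h ∂_x p − δ̄ τ̄_b; and (iv) displacement-thickness relation hU = (h − δ̄ δ₁) u_e. Then δ₁ and δ₂ satisfy the von Kármán equation ∂_t(u_e δ₁) + u_e δ₁ ∂_x u_e + ∂_x(u_e²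 δ₂) = τ̄_b at every point. -/
/-- Partial derivative in the first coordinate (time) of a function on ℝ². -/
noncomputable def pt2 (f : ℝ × ℝ → ℝ) (q : ℝ × ℝ) : ℝ :=
  deriv (fun s => f (s, q.2)) q.1

/-- Partial derivative in the second coordinate (space) of a function on ℝ². -/
noncomputable def px2 (f : ℝ × ℝ → ℝ) (q : ℝ × ℝ) : ℝ :=
  deriv (fun s => f (q.1, s)) q.2

/-!
The argument is a balance law for the mass-flux defect `h u_e - hU` of the viscous layer: adding
`u_e` times mass conservation to `h` times the ideal-fluid equation gives a balance law for
`h u_e` with the same pressure force as in momentum conservation for `hU`, so the difference of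
the two is free of pressure. The displacement-thickness relation turns the defect into `δ̄ u_e δ₁`
and the closed flux into `(hU) u_e - δ̄ u_e² δ₂`; dividing by `δ̄` leaves the von Kármán equation.
-/

open scoped Topology

section PartialDerivatives

variable {f g : ℝ × ℝ → ℝ} {q : ℝ × ℝ}

lemma hasDerivAt_pt2 (hf : DifferentiableAt ℝ f q) :
    HasDerivAt (fun s => f (s, q.2)) (pt2 f q) q.1 :=
  (hf.comp q.1 (by fun_prop : DifferentiableAt ℝ (fun s : ℝ => (s, q.2)) q.1)).hasDerivAt

lemma hasDerivAt_px2 (hf : DifferentiableAt ℝ f q) :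
    HasDerivAt (fun s => f (q.1, s)) (px2 f q) q.2 :=
  (hf.comp q.2 (by fun_prop : DifferentiableAt ℝ (fun s : ℝ => (q.1, s)) q.2)).hasDerivAt

lemma pt2_congr (hfg : f =ᶠ[𝓝 q] g) : pt2 f q = pt2 g q :=
  (hfg.comp_tendsto (Continuous.tendsto (f := fun s : ℝ => (s, q.2)) (by fun_prop) q.1)).deriv_eq

lemma px2_congr (hfg : f =ᶠ[𝓝 q] g) : px2 f q = px2 g q :=
  (hfg.comp_tendsto (Continuous.tendsto (f := fun s : ℝ => (q.1, s)) (by fun_prop) q.2)).deriv_eq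

lemma pt2_sub (hf : DifferentiableAt ℝ f q) (hg : DifferentiableAt ℝ g q) :
    pt2 (fun r => f r - g r) q = pt2 f q - pt2 g q :=
  ((hasDerivAt_pt2 hf).sub (hasDerivAt_pt2 hg)).deriv

lemma px2_sub (hf : DifferentiableAt ℝ f q) (hg : DifferentiableAt ℝ g q) :
    px2 (fun r => f r - g r) q = px2 f q - px2 g q :=
  ((hasDerivAt_px2 hf).sub (hasDerivAt_px2 hg)).deriv

lemma pt2_mul (hf : DifferentiableAt ℝ f q) (hg : DifferentiableAt ℝ g q) :
    pt2 (fun r => f r * g r) q = pt2 f q * g q + f q * pt2 g q :=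
  ((hasDerivAt_pt2 hf).mul (hasDerivAt_pt2 hg)).deriv

lemma px2_mul (hf : DifferentiableAt ℝ f q) (hg : DifferentiableAt ℝ g q) :
    px2 (fun r => f r * g r) q = px2 f q * g q + f q * px2 g q :=
  ((hasDerivAt_px2 hf).mul (hasDerivAt_px2 hg)).deriv

lemma pt2_const_mul (c : ℝ) (f : ℝ × ℝ → ℝ) (q : ℝ × ℝ) :
    pt2 (fun r => c * f r) q = c * pt2 f q :=
  deriv_const_mul_field c

lemma px2_const_mul (c : ℝ) (f : ℝ × ℝ → ℝ) (q : ℝ × ℝ) :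
    px2 (fun r => c * f r) q = c * px2 f q :=
  deriv_const_mul_field c

end PartialDerivatives

/-- Here `Q` is the mass flux, `K` the deficit of the momentum flux relative to `Q u`, and `G` and
`T` are the values at `q` of the pressure gradient and of the friction. -/
lemma massFluxDefect_balance {h u Q K : ℝ × ℝ → ℝ} {q : ℝ × ℝ} {G T : ℝ}
    (hh : DifferentiableAt ℝ h q) (hu : DifferentiableAt ℝ u q)
    (hQ : DifferentiableAt ℝ Q q) (hK : DifferentiableAt ℝ K q)
    (hEuler : pt2 u q + u q * px2 u q = -G)
    (hmass : pt2 h q + px2 Q q = 0)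
    (hmom : pt2 Q q + px2 (fun r => Q r * u r - K r) q = -h q * G - T) :
    pt2 (fun r => h r * u r - Q r) q + (h q * u q - Q q) * px2 u q + px2 K q = T := by
  rw [px2_sub (hQ.fun_mul hu) hK, px2_mul hQ hu] at hmom
  rw [pt2_sub (hh.fun_mul hu) hQ, pt2_mul hh hu]
  linear_combination u q * hmass + h q * hEuler - hmom

/-- `G` and `τ` are the values at `q` of the pressure gradient and of the bottom friction. -/
theorem vonKarman_from_closed_flux_general
    {δb : ℝ} (hδb : δb ≠ 0) {h U ue δ₁ δ₂ : ℝ × ℝ → ℝ} {q : ℝ × ℝ} {G τ : ℝ}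
    (hh : DifferentiableAt ℝ h q) (hue : DifferentiableAt ℝ ue q)
    (hδ₁ : DifferentiableAt ℝ δ₁ q) (hδ₂ : DifferentiableAt ℝ δ₂ q)
    (hEuler : pt2 ue q + ue q * px2 ue q = -G)
    (hmass : pt2 h q + px2 (fun r => h r * U r) q = 0)
    (hmom : pt2 (fun r => h r * U r) q
      + px2 (fun r => (h r - δb * (δ₁ r + δ₂ r)) * ue r ^ 2) q = -h q * G - δb * τ)
    (hdisp : ∀ᶠ r in 𝓝 q, h r * U r = (h r - δb * δ₁ r) * ue r) :
    pt2 (fun r => ue r * δ₁ r) q + ue q * δ₁ q * px2 ue q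
      + px2 (fun r => ue r ^ 2 * δ₂ r) q = τ := by
  have hflux : (fun r => (h r - δb * (δ₁ r + δ₂ r)) * ue r ^ 2)
      =ᶠ[𝓝 q] fun r => h r * U r * ue r - δb * (ue r ^ 2 * δ₂ r) :=
    hdisp.mono fun r hr => by linear_combination -ue r * hr
  have hdefect : (fun r => h r * ue r - h r * U r) =ᶠ[𝓝 q] fun r => δb * (ue r * δ₁ r) :=
    hdisp.mono fun r hr => by linear_combination -hr
  have hQ : DifferentiableAt ℝ (fun r => h r * U r) q :=
    DifferentiableAt.congr_of_eventuallyEq (by fun_prop) hdisp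
  rw [px2_congr hflux] at hmom
  have hbalance := massFluxDefect_balance hh hue hQ (by fun_prop) hEuler hmass hmom
  rw [pt2_congr hdefect, hdefect.eq_of_nhds, pt2_const_mul, px2_const_mul] at hbalance
  exact mul_left_cancel₀ hδb (by linear_combination hbalance)

/-- Conversely, if the shallow water equations hold with the closed momentum
flux `J = (h − δ̄(δ₁+δ₂))u_e²` together with the ideal-fluid momentum equation
and the displacement-thickness relation, then `δ₁` and `δ₂` satisfy the von
Kármán equation. -/
theorem vonKarman_from_closed_flux
    (δb : ℝ) (hδb : δb ≠ 0) (h U ue p δ₁ δ₂ τb : ℝ × ℝ → ℝ)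
    (hdh : Differentiable ℝ h) (hdU : Differentiable ℝ U)
    (hdue : Differentiable ℝ ue) (hdp : Differentiable ℝ p)
    (hdδ₁ : Differentiable ℝ δ₁) (hdδ₂ : Differentiable ℝ δ₂)
    (hdτ : Differentiable ℝ τb)
    -- (i) ideal fluid momentum
    (hEuler : ∀ q : ℝ × ℝ, pt2 ue q + ue q * px2 ue q = - px2 p q)
    -- (ii) mass conservation
    (hmass : ∀ q : ℝ × ℝ, pt2 h q + px2 (fun q => h q * U q) q = 0)
    -- (iii) momentum conservation with closed flux
    (hmom : ∀ q : ℝ × ℝ,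
      pt2 (fun q => h q * U q) q
        + px2 (fun q => (h q - δb * (δ₁ q + δ₂ q)) * (ue q) ^ 2) q
      = - h q * px2 p q - δb * τb q)
    -- (iv) displacement-thickness relation
    (hdisp : ∀ q : ℝ × ℝ, h q * U q = (h q - δb * δ₁ q) * ue q) :
    ∀ q : ℝ × ℝ,
      pt2 (fun q => ue q * δ₁ q) q + ue q * δ₁ q * px2 ue q
        + px2 (fun q => (ue q) ^ 2 * δ₂ q) q = τb q := fun q =>
  vonKarman_from_closed_flux_general hδb (hdh q) (hdue q) (hdδ₁ q) (hdδ₂ q)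
    (hEuler q) (hmass q) (hmom q) (.of_forall hdisp)
end
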